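/- (Almost sure convergence of Q-learning with Markovian samples.) Consider a finite MDP with state space S, action space A, reward r, transition kernel p, and discount γ ∈ [0,1). Fix a behavior policy π such that the induced Markov chain {(S_t, A_t)} on S × A is irreducible and aperiodic, and let the trajectory probability measure be constructed via the Ionescu–Tulcea theorem. Let the step sizes be α_t = 1/(t+2)^ν with ν ∈ (2/3, 1), and let the Q-learning iterates be q_0 given and q_{t+1}(s,a) = q_t(s,a) + α_t·(r(S_t,A_t) + γ·max_b q_t(S_{t+1}, b) − q_t(S_t, A_t))·𝟙[(s,a) = (S_t, A_t)]. Then q_t → q* almost surely, where q* is the optimal action-value function (the unique fixed point of the Bellman optimality operator). -/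

import Mathlib

/-!
Write `D t = q t - q*`. At the visited pair `y = ω t` the update reads
`D (t+1) y = (1 - α t) * D t y + α t * h t y + α t * w t`, where
`h t y = γ ∑ s', p y s' (max q t (s', ·) - max q* (s', ·))` satisfies `|h t y| ≤ γ ‖D t‖` and `w t` is
the difference between `γ max q t (S_{t+1}, ·)` and its conditional mean given the past. All other
coordinates are unchanged, which amounts to a step of size `0`. The Markovian nature of the samples
therefore enters only through the set of coordinates updated, not through the noise.

Three facts give convergence. The iterates are deterministically bounded, because each step is a
convex combination. The series `∑ α t w t 𝟙[ω t = y]` converges almost surely, being an `L²`-bounded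
martingale (`ae_exists_tendsto_sum_innovation`, from `∑ α t ^ 2 < ∞`). The steps
`∑ α t 𝟙[ω t = y]` diverge almost surely for every `y` (`ae_tendsto_sum_visits`); this uses a
potential function built from irreducibility and the same martingale lemma. On each path with these
properties the averaged noise tends to zero, and the contraction factor `γ < 1` forces `D t → 0`
(`tendsto_zero_of_async_contraction`).
-/

open Finset Matrix MeasureTheory Filter

/-- The set of return times of state `i` under the stochastic matrix `P`. -/
def returnTimes {Y : Type*} [Fintype Y] [DecidableEq Y] (P : Matrix Y Y ℝ) (i : Y) : Set ℕ :=
  {n | 1 ≤ n ∧ 0 < (P ^ n) i i}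

variable {S A : Type*} [Fintype S] [Fintype A] [Nonempty S] [Nonempty A]

/-- The Bellman optimality operator of a finite MDP. -/
noncomputable def bellmanOpt (r : S × A → ℝ) (p : S × A → S → ℝ) (γ : ℝ)
    (q : S × A → ℝ) : S × A → ℝ :=
  fun y => r y + γ * ∑ s', p y s' * ⨆ a', q (s', a')

/-! ### Deterministic averaging recursions -/

/-- A quantity that is repeatedly averaged, with weights of divergent sum, against targets of size
at most `c` is eventually at most `c + ε`: the excess `max (|x t| - c) 0` is multiplied by at most
`1 - a t ≤ exp (-a t)` at each step. -/
lemma eventually_abs_le_of_averaging {a x : ℕ → ℝ} {c ε : ℝ} (hε : 0 < ε)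
    (ha1 : ∀ t, a t ≤ 1)
    (ha : Tendsto (fun n => ∑ t ∈ range n, a t) atTop atTop)
    (hx : ∀ᶠ t in atTop, |x (t + 1)| ≤ (1 - a t) * |x t| + a t * c) :
    ∀ᶠ t in atTop, |x t| ≤ c + ε := by
  obtain ⟨T, hT⟩ := eventually_atTop.1 hx
  set z : ℕ → ℝ := fun t => max (|x t| - c) 0 with hz
  have hz0 : ∀ t, 0 ≤ z t := fun t => le_max_right _ _
  have key : ∀ n, T ≤ n →
      z n ≤ z T * Real.exp (∑ t ∈ range T, a t) * Real.exp (-∑ t ∈ range n, a t) := by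
    intro n hn
    induction n, hn using Nat.le_induction with
    | base => rw [mul_assoc, ← Real.exp_add]; simp
    | succ n hn ih =>
      have h1 : z (n + 1) ≤ (1 - a n) * z n := by
        refine max_le ?_ (mul_nonneg (by linarith [ha1 n]) (hz0 n))
        have := mul_le_mul_of_nonneg_left (le_max_left (|x n| - c) 0)
          (show 0 ≤ 1 - a n by linarith [ha1 n])
        have := hT n hn
        simp only [hz]
        linarith
      have h2 : (1 - a n) * z n ≤ Real.exp (-a n) * z n :=
        mul_le_mul_of_nonneg_right (by linarith [Real.add_one_le_exp (-a n)]) (hz0 n)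
      have h3 := mul_le_mul_of_nonneg_left ih (Real.exp_pos (-a n)).le
      rw [sum_range_succ, neg_add, Real.exp_add]
      linarith
  have hlim : Tendsto (fun n => z T * Real.exp (∑ t ∈ range T, a t) *
      Real.exp (-∑ t ∈ range n, a t)) atTop (nhds 0) := by
    have := (Real.tendsto_exp_neg_atTop_nhds_zero.comp ha).const_mul
      (z T * Real.exp (∑ t ∈ range T, a t))
    simpa using this
  filter_upwards [hlim.eventually (gt_mem_nhds hε), eventually_ge_atTop T] with n h1 h2
  have h3 := key n h2
  have h4 : |x n| - c ≤ z n := le_max_left _ _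
  linarith

/-- Averaged noise with convergent sum dies out. Adding the tail `R n = ∑_{t ≥ n} e t` to `W n` turns
the recursion into an averaging against `R`, which tends to `0`. -/
lemma tendsto_zero_of_averaging_noise {a e W : ℕ → ℝ} {l : ℝ}
    (ha0 : ∀ t, 0 ≤ a t) (ha1 : ∀ t, a t ≤ 1)
    (ha : Tendsto (fun n => ∑ t ∈ range n, a t) atTop atTop)
    (he : Tendsto (fun n => ∑ t ∈ range n, e t) atTop (nhds l))
    (hW : ∀ t, W (t + 1) = (1 - a t) * W t + e t) :
    Tendsto W atTop (nhds 0) := by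
  set R : ℕ → ℝ := fun n => l - ∑ t ∈ range n, e t with hR
  have hR0 : Tendsto R atTop (nhds 0) := by simpa using he.const_sub l
  have hV : ∀ t, W (t + 1) + R (t + 1) = (1 - a t) * (W t + R t) + a t * R t := by
    intro t
    simp only [hR, sum_range_succ, hW]
    ring
  suffices h : Tendsto (fun t => W t + R t) atTop (nhds 0) by simpa using h.sub hR0
  rw [Metric.tendsto_atTop'] at hR0 ⊢
  intro ε hε
  obtain ⟨N, hN⟩ := hR0 (ε / 3) (by positivity)
  have h := eventually_abs_le_of_averaging (x := fun t => W t + R t) (c := ε / 3) (ε := ε / 3)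
    (by positivity) ha1 ha (by
      filter_upwards [eventually_gt_atTop N] with t ht
      have h1 := hN t ht
      rw [Real.dist_eq, sub_zero] at h1
      rw [hV]
      refine (abs_add_le _ _).trans ?_
      rw [abs_mul, abs_mul, abs_of_nonneg (ha0 t), abs_of_nonneg (sub_nonneg.2 (ha1 t))]
      have := mul_le_mul_of_nonneg_left h1.le (ha0 t)
      linarith)
  obtain ⟨N', hN'⟩ := eventually_atTop.1 h
  refine ⟨N', fun n hn => ?_⟩
  rw [Real.dist_eq, sub_zero]
  linarith [hN' n hn.le]

/-- Asynchronous stochastic approximation with a sup-norm contraction, pathwise. `D` is the error,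
`a t y` the step taken at coordinate `y` (zero when `y` is not updated), `h` the contracted error and
`e` the noise, already multiplied by the step size. After subtracting the averaged noise `W`, which
vanishes, an eventual bound `C` on `D` improves to `(1 + γ) / 2 * C`. -/
lemma tendsto_zero_of_async_contraction {Y : Type*} [Fintype Y] {γ B : ℝ} (hγ0 : 0 ≤ γ)
    (hγ1 : γ < 1) {a e h D : ℕ → Y → ℝ} {l : Y → ℝ}
    (ha0 : ∀ t y, 0 ≤ a t y) (ha1 : ∀ t y, a t y ≤ 1)
    (ha : ∀ y, Tendsto (fun n => ∑ t ∈ range n, a t y) atTop atTop)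
    (he : ∀ y, Tendsto (fun n => ∑ t ∈ range n, e t y) atTop (nhds (l y)))
    (hB : ∀ t y, |D t y| ≤ B)
    (hh : ∀ t C, (∀ y, |D t y| ≤ C) → ∀ y, |h t y| ≤ γ * C)
    (hD : ∀ t y, D (t + 1) y = (1 - a t y) * D t y + a t y * h t y + e t y) :
    ∀ y, Tendsto (fun t => D t y) atTop (nhds 0) := by
  -- the response of the linear recursion to the noise alone
  let W : Y → ℕ → ℝ := fun y t => Nat.rec 0 (fun t w => (1 - a t y) * w + e t y) t
  have hWs : ∀ y t, W y (t + 1) = (1 - a t y) * W y t + e t y := fun y t => rfl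
  have hW : ∀ y, Tendsto (W y) atTop (nhds 0) := fun y =>
    tendsto_zero_of_averaging_noise (fun t => ha0 t y) (fun t => ha1 t y) (ha y) (he y) (hWs y)
  have step : ∀ C, 0 < C → (∀ᶠ t in atTop, ∀ y, |D t y| ≤ C) →
      ∀ᶠ t in atTop, ∀ y, |D t y| ≤ (1 + γ) / 2 * C := by
    intro C hC hev
    have hε : 0 < (1 - γ) / 4 * C := mul_pos (by linarith) hC
    rw [eventually_all]
    intro y
    have h1 := eventually_abs_le_of_averaging (x := fun t => D t y - W y t) (c := γ * C)
      hε (fun t => ha1 t y) (ha y) (by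
        filter_upwards [hev] with t ht
        have h1 := hh t C ht y
        have h2 : D (t + 1) y - W y (t + 1)
            = (1 - a t y) * (D t y - W y t) + a t y * h t y := by rw [hD, hWs]; ring
        rw [h2]
        refine (abs_add_le _ _).trans ?_
        rw [abs_mul, abs_mul, abs_of_nonneg (ha0 t y), abs_of_nonneg (sub_nonneg.2 (ha1 t y))]
        have := mul_le_mul_of_nonneg_left h1 (ha0 t y)
        linarith)
    have h2 : ∀ᶠ t in atTop, |W y t| < (1 - γ) / 4 * C := by
      have := (hW y).abs
      rw [abs_zero] at this
      exact this.eventually (gt_mem_nhds hε)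
    filter_upwards [h1, h2] with t h1 h2
    have h3 : |D t y| ≤ |D t y - W y t| + |W y t| := by
      simpa using abs_add_le (D t y - W y t) (W y t)
    nlinarith
  have iter : ∀ k : ℕ, ∀ᶠ t in atTop, ∀ y, |D t y| ≤ ((1 + γ) / 2) ^ k * (|B| + 1) := by
    intro k
    induction k with
    | zero =>
      refine Eventually.of_forall fun t y => ?_
      rw [pow_zero, one_mul]
      linarith [hB t y, le_abs_self B]
    | succ k ih =>
      have := step _ (by positivity) ih
      rw [pow_succ', mul_assoc]
      exact this
  intro y
  have hpow : Tendsto (fun k : ℕ => ((1 + γ) / 2) ^ k * (|B| + 1)) atTop (nhds 0) := by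
    simpa using (tendsto_pow_atTop_nhds_zero_of_lt_one (r := (1 + γ) / 2)
      (by positivity) (by linarith)).mul_const (|B| + 1)
  rw [Metric.tendsto_atTop']
  intro ε hε
  obtain ⟨k, hk⟩ := (hpow.eventually (gt_mem_nhds hε)).exists
  obtain ⟨N, hN⟩ := eventually_atTop.1 (iter k)
  refine ⟨N, fun n hn => ?_⟩
  rw [Real.dist_eq, sub_zero]
  exact (hN n hn.le y).trans_lt hk

/-! ### Martingale noise along the chain -/

/-- The infinite path that follows the finite path `x` up to time `n` and then stays at `x n`. -/
def extendPath {Y : Type*} {n : ℕ} (x : Finset.Iic n → Y) : ℕ → Y :=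
  fun i => x ⟨min i n, by simp⟩

lemma extendPath_restrict {Y : Type*} {n : ℕ} (ω : ℕ → Y) {i : ℕ} (hi : i ≤ n) :
    extendPath (Preorder.frestrictLe n ω) i = ω i := by
  simp [extendPath, Nat.min_eq_left hi]

/-- Paths up to time `n` form a finite discrete space, so dependence on the coordinates `≤ n` alone
already gives measurability with respect to the canonical filtration. -/
lemma DependsOn.measurable_piLE {Y : Type*} [Fintype Y] [MeasurableSpace Y] [MeasurableSingletonClass Y]
    {n : ℕ} {f : (ℕ → Y) → ℝ} (hf : DependsOn f (Set.Iic n)) :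
    Measurable[Filtration.piLE (X := fun _ : ℕ => Y) n] f := by
  have h : f = (fun x => f (extendPath x)) ∘ Preorder.frestrictLe (π := fun _ : ℕ => Y) n := by
    funext ω
    exact hf fun i hi => (extendPath_restrict ω hi).symm
  rw [h, Filtration.piLE_eq_comap_frestrictLe]
  exact Measurable.comp (Measurable.of_discrete) (comap_measurable _)

lemma DependsOn.integrable {Y : Type*} [Fintype Y] [MeasurableSpace Y] [MeasurableSingletonClass Y]
    {n : ℕ} {f : (ℕ → Y) → ℝ} (hf : DependsOn f (Set.Iic n))
    (μ : Measure (ℕ → Y)) [IsFiniteMeasure μ] : Integrable f μ := by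
  refine Integrable.of_bound
    ((hf.measurable_piLE.mono (Filtration.piLE.le n) le_rfl).aestronglyMeasurable)
    (∑ x : Finset.Iic n → Y, |f (extendPath x)|) (Eventually.of_forall fun ω => ?_)
  rw [hf fun i hi => (extendPath_restrict ω hi).symm, Real.norm_eq_abs]
  exact Finset.single_le_sum (f := fun x : Finset.Iic n → Y => |f (extendPath x)|)
    (fun x _ => abs_nonneg _) (Finset.mem_univ _)

/-- The innovation at time `t + 1` of a random function `G t ω : Y → ℝ` chosen at time `t`: its value
at the next state minus its mean under the transition probabilities from the current state. -/
def innovation {Y : Type*} [Fintype Y] (P : Matrix Y Y ℝ) (G : ℕ → (ℕ → Y) → Y → ℝ) (t : ℕ) (ω : ℕ → Y) : ℝ :=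
  G t ω (ω (t + 1)) - ∑ y, P (ω t) y * G t ω y

lemma innovation_dependsOn {Y : Type*} [Fintype Y] (P : Matrix Y Y ℝ) {G : ℕ → (ℕ → Y) → Y → ℝ}
    (hG : ∀ t, DependsOn (G t) (Set.Iic t)) (t : ℕ) :
    DependsOn (innovation P G t) (Set.Iic (t + 1)) := by
  intro ω ω' h
  have h1 : G t ω = G t ω' := hG t fun i hi => h i (le_trans hi (Nat.le_succ t))
  simp only [innovation, h1, h (t + 1) (Set.mem_Iic.2 le_rfl), h t (Set.mem_Iic.2 (Nat.le_succ t))]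

/-- Innovations have mean zero. Multiplying `G` by any function of the path up to time `t` gives
another admissible `G`, so this is the full statement that they are martingale differences. The path
space splits into finitely many cylinders of length `t + 2`, on each of which the innovation is
constant. -/
lemma integral_innovation_eq_zero
    {Y : Type*} [Fintype Y] [DecidableEq Y] [MeasurableSpace Y] [MeasurableSingletonClass Y]
    {P : Matrix Y Y ℝ} (hP0 : ∀ y y', 0 ≤ P y y')
    (hP1 : ∀ y, ∑ y', P y y' = 1) {ι : Y → ℝ} (hι : ∀ y, 0 ≤ ι y)
    {μ : Measure (ℕ → Y)} [IsProbabilityMeasure μ]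
    (hμ : ∀ (n : ℕ) (ys : ℕ → Y), μ {ω | ∀ i ≤ n, ω i = ys i} =
        ENNReal.ofReal (ι (ys 0) * ∏ i ∈ Finset.range n, P (ys i) (ys (i + 1))))
    {G : ℕ → (ℕ → Y) → Y → ℝ} (t : ℕ) (hG : DependsOn (G t) (Set.Iic t)) :
    ∫ ω, innovation P G t ω ∂μ = 0 := by
  set cyl : (Finset.Iic t → Y) → Y → Set (ℕ → Y) := fun x y =>
    {ω | ∀ i ≤ t + 1, ω i = Function.update (extendPath x) (t + 1) y i} with hcyl
  set c : (Finset.Iic t → Y) → ℝ := fun x =>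
    ∑ y, P (extendPath x t) y * G t (extendPath x) y with hc
  have hmeas : ∀ x y, MeasurableSet (cyl x y) := by
    intro x y
    have : cyl x y = ⋂ i ∈ Finset.Iic (t + 1),
        (fun ω : ℕ → Y => ω i) ⁻¹' {Function.update (extendPath x) (t + 1) y i} := by
      ext ω; simp [hcyl]
    rw [this]
    exact Finset.measurableSet_biInter _ fun i _ => measurable_pi_apply i (measurableSet_singleton _)
  have hmem : ∀ ω x y, ω ∈ cyl x y ↔ x = Preorder.frestrictLe t ω ∧ y = ω (t + 1) := by
    intro ω x y
    constructor
    · intro h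
      refine ⟨?_, by simpa using (h (t + 1) le_rfl).symm⟩
      funext i
      have hi : (i : ℕ) ≤ t := Finset.mem_Iic.1 i.2
      have := h i (by omega)
      rw [Function.update_of_ne (by omega)] at this
      simp only [extendPath, Nat.min_eq_left hi] at this
      simpa using this.symm
    · rintro ⟨rfl, rfl⟩ i hi
      rcases eq_or_lt_of_le hi with rfl | hi
      · simp
      · rw [Function.update_of_ne (by omega), extendPath_restrict ω (by omega)]
  have hdecomp : ∀ ω, innovation P G t ω =
      ∑ x, ∑ y, (cyl x y).indicator (fun _ => G t (extendPath x) y - c x) ω := by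
    intro ω
    have hω : G t ω = G t (extendPath (Preorder.frestrictLe t ω)) :=
      hG fun i hi => (extendPath_restrict ω hi).symm
    rw [Finset.sum_eq_single (Preorder.frestrictLe t ω), Finset.sum_eq_single (ω (t + 1))]
    · rw [Set.indicator_of_mem ((hmem _ _ _).2 ⟨rfl, rfl⟩)]
      simp only [innovation, hc, ← hω, extendPath_restrict ω le_rfl]
    · intro y _ hy
      exact Set.indicator_of_notMem (fun h => hy ((hmem _ _ _).1 h).2) _
    · simp
    · intro x _ hx
      exact Finset.sum_eq_zero fun y _ =>
        Set.indicator_of_notMem (fun h => hx ((hmem _ _ _).1 h).1) _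
    · simp
  have hmass : ∀ x y, μ.real (cyl x y) = (ι (extendPath x 0) *
      ∏ i ∈ Finset.range t, P (extendPath x i) (extendPath x (i + 1))) * P (extendPath x t) y := by
    intro x y
    rw [measureReal_def, hμ, ENNReal.toReal_ofReal, Finset.prod_range_succ,
      Function.update_of_ne (by omega), Function.update_of_ne (by omega), Function.update_self,
      mul_assoc]
    · congr 2
      refine Finset.prod_congr rfl fun i hi => ?_
      have := Finset.mem_range.1 hi
      rw [Function.update_of_ne (by omega), Function.update_of_ne (by omega)]
    · exact mul_nonneg (hι _) (Finset.prod_nonneg fun i _ => hP0 _ _)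
  have hind_int : ∀ x y, Integrable
      ((cyl x y).indicator (fun _ => G t (extendPath x) y - c x)) μ :=
    fun x y => (integrable_const _).indicator (hmeas x y)
  simp_rw [hdecomp]
  rw [integral_finsetSum _ fun x _ => integrable_finsetSum _ fun y _ => hind_int x y]
  refine Finset.sum_eq_zero fun x _ => ?_
  rw [integral_finsetSum _ fun y _ => hind_int x y]
  simp_rw [integral_indicator_const _ (hmeas x _), hmass, smul_eq_mul, mul_assoc]
  rw [← Finset.mul_sum, ← Finset.mul_sum]
  simp_rw [mul_sub]
  rw [Finset.sum_sub_distrib, ← Finset.sum_mul, hP1]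
  simp [hc]

/-- Bounded innovations weighted by square-summable steps form an `L²`-bounded martingale, so their
series converges almost surely. -/
lemma ae_exists_tendsto_sum_innovation
    {Y : Type*} [Fintype Y] [DecidableEq Y] [MeasurableSpace Y] [MeasurableSingletonClass Y]
    {P : Matrix Y Y ℝ} (hP0 : ∀ y y', 0 ≤ P y y')
    (hP1 : ∀ y, ∑ y', P y y' = 1) {ι : Y → ℝ} (hι : ∀ y, 0 ≤ ι y)
    {μ : Measure (ℕ → Y)} [IsProbabilityMeasure μ]
    (hμ : ∀ (n : ℕ) (ys : ℕ → Y), μ {ω | ∀ i ≤ n, ω i = ys i} =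
        ENNReal.ofReal (ι (ys 0) * ∏ i ∈ Finset.range n, P (ys i) (ys (i + 1))))
    {α : ℕ → ℝ} (hα : Summable fun t => α t ^ 2)
    {G : ℕ → (ℕ → Y) → Y → ℝ} (hG : ∀ t, DependsOn (G t) (Set.Iic t))
    {B : ℝ} (hB : ∀ t ω y, |G t ω y| ≤ B) :
    ∀ᵐ ω ∂μ, ∃ l, Tendsto (fun n => ∑ t ∈ range n, α t * innovation P G t ω) atTop (nhds l) := by
  set M : ℕ → (ℕ → Y) → ℝ := fun n ω => ∑ t ∈ range n, α t * innovation P G t ω with hM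
  have hMs : ∀ n ω, M (n + 1) ω = M n ω + α n * innovation P G n ω := fun n ω => by
    simp only [hM, Finset.sum_range_succ]
  have hdep : ∀ n, DependsOn (M n) (Set.Iic n) := by
    intro n ω ω' h
    refine Finset.sum_congr rfl fun t ht => ?_
    rw [innovation_dependsOn P hG t fun i hi =>
      h i (le_trans hi (Nat.succ_le_of_lt (Finset.mem_range.1 ht)))]
  -- a factor known at time `n` can be absorbed into `G`
  have horth : ∀ (n : ℕ) (H : (ℕ → Y) → ℝ), DependsOn H (Set.Iic n) →
      ∫ ω, H ω * innovation P G n ω ∂μ = 0 := by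
    intro n H hH
    rw [← integral_innovation_eq_zero hP0 hP1 hι hμ (G := fun t ω y => H ω * G t ω y) n
      (fun ω ω' h => by simp only [hH h, hG n h])]
    congr 1
    funext ω
    simp only [innovation, mul_sub, Finset.mul_sum]
    congr 1
    exact Finset.sum_congr rfl fun y _ => by ring
  have hprod : ∀ (n : ℕ) (H : (ℕ → Y) → ℝ), DependsOn H (Set.Iic n) →
      DependsOn (fun ω => H ω * innovation P G n ω) (Set.Iic (n + 1)) := by
    intro n H hH ω ω' h
    simp only [hH fun i hi => h i (le_trans hi (Nat.le_succ n)), innovation_dependsOn P hG n h]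
  have hmart : Martingale M (Filtration.piLE (X := fun _ : ℕ => Y)) μ := by
    refine martingale_of_setIntegral_eq_succ
      (fun n => (hdep n).measurable_piLE.stronglyMeasurable)
      (fun n => (hdep n).integrable μ) fun n s hs => ?_
    have hs' : MeasurableSet s := Filtration.piLE.le n s hs
    have hind : DependsOn (s.indicator fun _ => (1 : ℝ)) (Set.Iic n) :=
      Measurable.dependsOn_of_piLE (measurable_const.indicator hs)
    rw [← integral_indicator hs', ← integral_indicator hs', ← sub_eq_zero, ← integral_sub
      (((hdep n).integrable μ).indicator hs') (((hdep (n + 1)).integrable μ).indicator hs')]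
    have := horth n (fun ω => -α n * s.indicator (fun _ => (1 : ℝ)) ω)
      (fun ω ω' h => by simp only [hind h])
    rw [← this]
    congr 1
    funext ω
    by_cases hω : ω ∈ s <;> simp [hω, hMs]
  have hinn : ∀ t ω, innovation P G t ω ^ 2 ≤ (2 * B) ^ 2 := by
    intro t ω
    refine sq_le_sq' ?_ ?_ <;>
    · have h1 := abs_le.1 (hB t ω (ω (t + 1)))
      have h2 : |∑ y, P (ω t) y * G t ω y| ≤ B := by
        refine (Finset.abs_sum_le_sum_abs _ _).trans ?_
        calc ∑ y, |P (ω t) y * G t ω y| ≤ ∑ y, P (ω t) y * B := by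
              refine Finset.sum_le_sum fun y _ => ?_
              rw [abs_mul, abs_of_nonneg (hP0 _ _)]
              exact mul_le_mul_of_nonneg_left (hB _ _ _) (hP0 _ _)
          _ = B := by rw [← Finset.sum_mul, hP1, one_mul]
      have h3 := abs_le.1 h2
      simp only [innovation]
      linarith
  have hsqdep : ∀ n, DependsOn (fun ω => M n ω ^ 2) (Set.Iic n) := fun n ω ω' h => by
    simp only [hdep n h]
  have hsq : ∀ n, ∫ ω, M n ω ^ 2 ∂μ ≤ ∑ t ∈ range n, α t ^ 2 * (2 * B) ^ 2 := by
    intro n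
    induction n with
    | zero => simp [hM]
    | succ n ih =>
      have e1 : ∀ ω, M (n + 1) ω ^ 2 = M n ω ^ 2 + ((2 * α n * M n ω) * innovation P G n ω
          + α n ^ 2 * innovation P G n ω ^ 2) := fun ω => by rw [hMs]; ring
      have d1 : DependsOn (fun ω => 2 * α n * M n ω) (Set.Iic n) := fun ω ω' h => by
        simp only [hdep n h]
      have d2 : DependsOn (fun ω => α n ^ 2 * innovation P G n ω ^ 2) (Set.Iic (n + 1)) :=
        fun ω ω' h => by simp only [innovation_dependsOn P hG n h]
      have i1 := (hprod n _ d1).integrable μ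
      have i2 := d2.integrable μ
      simp_rw [e1]
      rw [integral_add ((hsqdep n).integrable μ) (show Integrable (fun ω => 2 * α n * M n ω * innovation P G n ω
        + α n ^ 2 * innovation P G n ω ^ 2) μ from i1.add i2), integral_add i1 i2, horth n _ d1,
        zero_add, Finset.sum_range_succ]
      refine add_le_add ih ?_
      calc ∫ ω, α n ^ 2 * innovation P G n ω ^ 2 ∂μ ≤ ∫ ω, α n ^ 2 * (2 * B) ^ 2 ∂μ :=
            integral_mono i2 (integrable_const _) fun ω =>
              mul_le_mul_of_nonneg_left (hinn n ω) (sq_nonneg _)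
        _ = α n ^ 2 * (2 * B) ^ 2 := by simp
  set R : ℝ := 1 + (∑' t, α t ^ 2) * (2 * B) ^ 2 with hR
  have hL1 : ∀ n, eLpNorm (M n) 1 μ ≤ (R.toNNReal : ENNReal) := by
    intro n
    rw [eLpNorm_one_eq_lintegral_enorm,
      ← ofReal_integral_norm_eq_lintegral_enorm ((hdep n).integrable μ)]
    refine ENNReal.ofReal_le_ofReal ?_
    calc ∫ ω, ‖M n ω‖ ∂μ ≤ ∫ ω, (1 + M n ω ^ 2) ∂μ := by
          refine integral_mono ((hdep n).integrable μ).norm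
            ((integrable_const _).add ((hsqdep n).integrable μ)) fun ω => ?_
          simp only [Real.norm_eq_abs]
          nlinarith [sq_nonneg (|M n ω| - 1), sq_abs (M n ω)]
      _ = 1 + ∫ ω, M n ω ^ 2 ∂μ := by
          rw [integral_add (integrable_const _) ((hsqdep n).integrable μ)]; simp
      _ ≤ R := by
          rw [hR]
          have h1 := hsq n
          rw [← Finset.sum_mul] at h1
          have h2 := mul_le_mul_of_nonneg_right
            (hα.sum_le_tsum (range n) fun t _ => sq_nonneg (α t)) (sq_nonneg (2 * B))
          linarith
  exact hmart.submartingale.exists_ae_tendsto_of_bdd hL1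

/-! ### Every state is visited often enough -/

/-- A potential `V ≥ 0` with drift at least `δ > 0` away from `y` and bounded below at `y`. With `f`
the indicator of `y`, take `V = ∑_{m < N} ∑_{k < m} P ^ k f`: its drift telescopes to
`∑_{m < N} P ^ m f - N f`, and the first sum is bounded below by irreducibility for large `N`. -/
lemma exists_drift_function {Y : Type*} [Fintype Y] [DecidableEq Y] {P : Matrix Y Y ℝ} (hP0 : ∀ y y', 0 ≤ P y y') [Nonempty Y]
    (hirr : ∀ y y', ∃ n : ℕ, 0 < (P ^ n) y y') (y : Y) :
    ∃ (V : Y → ℝ) (δ K : ℝ), 0 < δ ∧ 0 < K ∧ (∀ x, 0 ≤ V x) ∧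
      ∀ x, δ - K * (if x = y then 1 else 0) ≤ ∑ x', P x x' * V x' - V x := by
  choose n hn using fun x => hirr x y
  set u : ℕ → Y → ℝ := fun k x => (P ^ k) x y with hu
  have hus : ∀ k x, u (k + 1) x = ∑ x', P x x' * u k x' := fun k x => by
    simp only [hu, pow_succ', Matrix.mul_apply]
  have hu0 : ∀ k x, 0 ≤ u k x := by
    intro k
    induction k with
    | zero => intro x; simp only [hu, pow_zero, Matrix.one_apply]; split_ifs <;> norm_num
    | succ k ih =>
      intro x
      rw [hus]
      exact Finset.sum_nonneg fun x' _ => mul_nonneg (hP0 _ _) (ih x')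
  set N : ℕ := (Finset.univ.sup n) + 1 with hN
  have hlt : ∀ x, n x ∈ range N := fun x =>
    Finset.mem_range.2 (Nat.lt_succ_of_le (Finset.le_sup (Finset.mem_univ x)))
  obtain ⟨x₀, hx₀⟩ := Finite.exists_min fun x => u (n x) x
  refine ⟨fun x => ∑ m ∈ range N, ∑ k ∈ range m, u k x, u (n x₀) x₀, N, hn x₀,
    by rw [hN]; positivity,
    fun x => Finset.sum_nonneg fun m _ => Finset.sum_nonneg fun k _ => hu0 k x, fun x => ?_⟩
  have h1 : ∑ x', P x x' * ∑ m ∈ range N, ∑ k ∈ range m, u k x'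
      = ∑ m ∈ range N, ∑ k ∈ range m, u (k + 1) x := by
    simp_rw [hus, Finset.mul_sum]
    rw [Finset.sum_comm]
    exact Finset.sum_congr rfl fun m _ => Finset.sum_comm
  have h2 : u 0 x = if x = y then 1 else 0 := by simp [hu, Matrix.one_apply]
  have h3 : u (n x) x ≤ ∑ m ∈ range N, u m x :=
    Finset.single_le_sum (f := fun m => u m x) (fun m _ => hu0 m x) (hlt x)
  rw [h1, ← Finset.sum_sub_distrib]
  simp_rw [← Finset.sum_sub_distrib, Finset.sum_range_sub (fun k => u k x)]
  rw [Finset.sum_sub_distrib, Finset.sum_const, Finset.card_range, nsmul_eq_mul, h2]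
  linarith [hx₀ x]

/-- The step sizes used at a fixed state `y` have divergent sum. Along the path the drift inequality
for `V` is summed against `α`; the innovations of `V` contribute a convergent series and the
increments of `V` a sum bounded above, because `V` is bounded and `α` antitone. -/
lemma ae_tendsto_sum_visits
    {Y : Type*} [Fintype Y] [DecidableEq Y] [MeasurableSpace Y] [MeasurableSingletonClass Y]
    {P : Matrix Y Y ℝ} (hP0 : ∀ y y', 0 ≤ P y y') [Nonempty Y]
    (hP1 : ∀ y, ∑ y', P y y' = 1) (hirr : ∀ y y', ∃ n : ℕ, 0 < (P ^ n) y y')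
    {ι : Y → ℝ} (hι : ∀ y, 0 ≤ ι y)
    {μ : Measure (ℕ → Y)} [IsProbabilityMeasure μ]
    (hμ : ∀ (n : ℕ) (ys : ℕ → Y), μ {ω | ∀ i ≤ n, ω i = ys i} =
        ENNReal.ofReal (ι (ys 0) * ∏ i ∈ Finset.range n, P (ys i) (ys (i + 1))))
    {α : ℕ → ℝ} (hα0 : ∀ t, 0 ≤ α t) (hanti : Antitone α) (hα2 : Summable fun t => α t ^ 2)
    (hα1 : Tendsto (fun n => ∑ t ∈ range n, α t) atTop atTop) (y : Y) :
    ∀ᵐ ω ∂μ, Tendsto (fun n => ∑ t ∈ range n, α t * (if y = ω t then 1 else 0)) atTop atTop := by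
  obtain ⟨V, δ, K, hδ, hK, hV0, hV⟩ := exists_drift_function hP0 hirr y
  obtain ⟨B, hVB⟩ : ∃ B, ∀ x, V x ≤ B :=
    ⟨∑ x, V x, fun x => Finset.single_le_sum (fun x _ => hV0 x) (Finset.mem_univ x)⟩
  filter_upwards [ae_exists_tendsto_sum_innovation hP0 hP1 hι hμ hα2
    (G := fun _ _ => V) (fun t ω ω' _ => rfl) (B := B)
    (fun t ω x => by rw [abs_of_nonneg (hV0 x)]; exact hVB x)] with ω ⟨l, hl⟩
  -- summation by parts
  have habel : ∀ n, ∑ t ∈ range n, α t * (V (ω (t + 1)) - V (ω t))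
      ≤ α 0 * B - α n * (B - V (ω n)) := by
    intro n
    induction n with
    | zero =>
      have := mul_nonneg (hα0 0) (hV0 (ω 0))
      simp only [Finset.range_zero, Finset.sum_empty]
      linarith
    | succ n ih =>
      rw [Finset.sum_range_succ]
      have := mul_le_mul_of_nonneg_right (hanti (Nat.le_succ n))
        (sub_nonneg.2 (hVB (ω (n + 1))))
      linarith
  have hlow : ∀ n, K⁻¹ * (δ * ∑ t ∈ range n, α t
      + (∑ t ∈ range n, α t * innovation P (fun _ _ => V) t ω - α 0 * B))
      ≤ ∑ t ∈ range n, α t * (if y = ω t then 1 else 0) := by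
    intro n
    rw [inv_mul_le_iff₀ hK]
    have h1 : ∑ t ∈ range n, α t * (δ - K * (if y = ω t then 1 else 0)) ≤
        ∑ t ∈ range n, α t * ((V (ω (t + 1)) - V (ω t)) - innovation P (fun _ _ => V) t ω) := by
      refine Finset.sum_le_sum fun t _ => mul_le_mul_of_nonneg_left ?_ (hα0 t)
      have := hV (ω t)
      simp only [innovation, eq_comm (a := y)]
      linarith
    have h2 : ∑ t ∈ range n, α t * (δ - K * (if y = ω t then 1 else 0))
        = δ * ∑ t ∈ range n, α t - K * ∑ t ∈ range n, α t * (if y = ω t then 1 else 0) := by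
      rw [Finset.mul_sum, Finset.mul_sum, ← Finset.sum_sub_distrib]
      exact Finset.sum_congr rfl fun t _ => by ring
    have h3 : ∑ t ∈ range n, α t * ((V (ω (t + 1)) - V (ω t)) - innovation P (fun _ _ => V) t ω)
        = ∑ t ∈ range n, α t * (V (ω (t + 1)) - V (ω t))
          - ∑ t ∈ range n, α t * innovation P (fun _ _ => V) t ω := by
      rw [← Finset.sum_sub_distrib]
      exact Finset.sum_congr rfl fun t _ => by ring
    have h4 := habel n
    have h5 := mul_nonneg (hα0 n) (sub_nonneg.2 (hVB (ω n)))
    linarith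
  refine tendsto_atTop_mono hlow (Tendsto.const_mul_atTop (inv_pos.2 hK) ?_)
  exact (Tendsto.const_mul_atTop hδ hα1).atTop_add (hl.sub tendsto_const_nhds)

/-! ### The step sizes and the maximum over actions -/

lemma antitone_stepSize {ν : ℝ} (hν : 0 < ν) :
    Antitone fun t : ℕ => 1 / ((t : ℝ) + 2) ^ ν := by
  intro s t hst
  have : (s : ℝ) ≤ t := Nat.cast_le.2 hst
  exact one_div_le_one_div_of_le (by positivity)
    (Real.rpow_le_rpow (by positivity) (by linarith) hν.le)

lemma stepSize_le_one {ν : ℝ} (hν : 0 < ν) (t : ℕ) : 1 / ((t : ℝ) + 2) ^ ν ≤ 1 := by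
  have h : (0 : ℝ) ≤ t := Nat.cast_nonneg t
  rw [div_le_one (by positivity)]
  exact Real.one_le_rpow (by linarith) hν.le

lemma summable_stepSize_sq {ν : ℝ} (hν : 2 / 3 < ν) :
    Summable fun t : ℕ => (1 / ((t : ℝ) + 2) ^ ν) ^ 2 := by
  have h := (summable_nat_add_iff 2).2 (Real.summable_one_div_nat_rpow.2
    (show 1 < ν * (2 : ℕ) by push_cast; linarith))
  refine h.congr fun t => ?_
  rw [Real.rpow_mul_natCast (by positivity), _root_.one_div_pow]
  push_cast
  rfl

lemma tendsto_sum_stepSize {ν : ℝ} (hν : ν < 1) :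
    Tendsto (fun n => ∑ t ∈ range n, 1 / ((t : ℝ) + 2) ^ ν) atTop atTop := by
  rw [← not_summable_iff_tendsto_nat_atTop_of_nonneg fun t => by positivity]
  intro h
  have h2 := (summable_nat_add_iff (f := fun t : ℕ => 1 / (t : ℝ) ^ ν) 2).1
    (h.congr fun t => by push_cast; rfl)
  linarith [Real.summable_one_div_nat_rpow.1 h2]

lemma abs_ciSup_sub_ciSup_le {X : Type*} [Finite X] [Nonempty X] {f g : X → ℝ} {C : ℝ}
    (h : ∀ b, |f b - g b| ≤ C) : |(⨆ b, f b) - ⨆ b, g b| ≤ C := by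
  have aux : ∀ f g : X → ℝ, (∀ b, |f b - g b| ≤ C) → (⨆ b, f b) ≤ C + ⨆ b, g b :=
    fun f g h => ciSup_le fun b => by
      have h1 := le_ciSup (Set.finite_range g).bddAbove b
      linarith [(abs_le.1 (h b)).2]
  have h1 := aux f g h
  have h2 := aux g f fun b => by rw [abs_sub_comm]; exact h b
  exact abs_le.2 ⟨by linarith, by linarith⟩

/-- Almost sure convergence of Q-learning with Markovian samples: on the trajectory
space of the chain `{(S_t, A_t)}` induced by a fixed behavior policy `π` (with the
trajectory measure given by the Ionescu–Tulcea theorem, characterized here via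
cylinder probabilities), the Q-learning iterates with step sizes `α_t = 1/(t+2)^ν`,
`ν ∈ (2/3, 1)`, converge almost surely to the optimal action-value function `q*`. -/
theorem ae_tendsto_of_QLearning_markov
    [DecidableEq S] [DecidableEq A]
    [MeasurableSpace S] [MeasurableSingletonClass S]
    [MeasurableSpace A] [MeasurableSingletonClass A]
    -- the MDP
    (r : S × A → ℝ) (p : S × A → S → ℝ)
    (hpnonneg : ∀ y s', 0 ≤ p y s') (hpsum : ∀ y, ∑ s', p y s' = 1)
    (γ : ℝ) (hγ0 : 0 ≤ γ) (hγ1 : γ < 1)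
    -- the optimal action-value function
    (qstar : S × A → ℝ) (hqstar : bellmanOpt r p γ qstar = qstar)
    -- the behavior policy and the induced chain on S × A
    (π : S → A → ℝ) (hπnonneg : ∀ s a, 0 ≤ π s a) (hπsum : ∀ s, ∑ a, π s a = 1)
    (Pind : Matrix (S × A) (S × A) ℝ)
    (hPind : Pind = fun y y' => p y y'.1 * π y'.1 y'.2)
    (hirr : ∀ y y', ∃ n : ℕ, 0 < (Pind ^ n) y y')
    (haper : ∀ y, ∀ e : ℕ, (∀ n ∈ returnTimes Pind y, e ∣ n) → e = 1)
    -- step sizes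
    (ν : ℝ) (hν : ν ∈ Set.Ioo (2 / 3 : ℝ) 1)
    (α : ℕ → ℝ) (hα : α = fun t : ℕ => 1 / ((t : ℝ) + 2) ^ ν)
    -- the trajectory measure, characterized by its cylinder probabilities
    (ι : S × A → ℝ) (hιnonneg : ∀ y, 0 ≤ ι y) (hιsum : ∑ y, ι y = 1)
    (μ : Measure (ℕ → S × A)) [IsProbabilityMeasure μ]
    (hμ : ∀ (n : ℕ) (ys : ℕ → S × A),
      μ {ω | ∀ i ≤ n, ω i = ys i} =
        ENNReal.ofReal (ι (ys 0) * ∏ i ∈ Finset.range n, Pind (ys i) (ys (i + 1))))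
    -- the Q-learning iterates
    (q₀ : S × A → ℝ) (q : ℕ → (ℕ → S × A) → (S × A → ℝ))
    (hq0 : ∀ ω, q 0 ω = q₀)
    (hqstep : ∀ t ω y, q (t + 1) ω y = q t ω y +
      α t * (r (ω t) + γ * (⨆ b, q t ω ((ω (t + 1)).1, b)) - q t ω (ω t))
        * (if y = ω t then 1 else 0)) :
    ∀ᵐ ω ∂μ, Tendsto (fun t => q t ω) atTop (nhds qstar) := by
  have hν0 : 0 < ν := by linarith [hν.1]
  have hα0 : ∀ t, 0 ≤ α t := fun t => by rw [hα]; positivity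
  have hα1 : ∀ t, α t ≤ 1 := fun t => by rw [hα]; exact stepSize_le_one hν0 t
  have hP0 : ∀ y y', 0 ≤ Pind y y' := fun y y' => by
    rw [hPind]; exact mul_nonneg (hpnonneg _ _) (hπnonneg _ _)
  -- under `Pind` the next state has law `p y`, whatever the policy does afterwards
  have hPsum : ∀ (y : S × A) (f : S → ℝ), ∑ y', Pind y y' * f y'.1 = ∑ s', p y s' * f s' := by
    intro y f
    rw [Fintype.sum_prod_type, hPind]
    refine Finset.sum_congr rfl fun s _ => ?_
    calc ∑ a, p y s * π s a * f s = p y s * f s * ∑ a, π s a := by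
          rw [Finset.mul_sum]; exact Finset.sum_congr rfl fun a _ => by ring
      _ = p y s * f s := by rw [hπsum, mul_one]
  have hP1 : ∀ y, ∑ y', Pind y y' = 1 := fun y => by
    simpa [hpsum] using hPsum y fun _ => 1
  have hdep : ∀ t, DependsOn (q t) (Set.Iic t) := by
    intro t
    induction t with
    | zero => intro ω ω' _; rw [hq0, hq0]
    | succ t ih =>
      intro ω ω' h
      funext y
      rw [hqstep, hqstep, ih fun i hi => h i (le_trans hi (Nat.le_succ t)),
        h t (Set.mem_Iic.2 (Nat.le_succ t)), h (t + 1) (Set.mem_Iic.2 le_rfl)]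
  -- `C` satisfies `|r y| + γ * C ≤ C`, so the ball of radius `C` is preserved
  obtain ⟨C, hC0, hCr⟩ : ∃ C : ℝ, (∀ y, |q₀ y| ≤ C) ∧ ∀ y, |r y| + γ * C ≤ C := by
    have hg : 0 < 1 - γ := by linarith
    refine ⟨∑ y, |q₀ y| + (∑ y, |r y|) / (1 - γ), fun y => ?_, fun y => ?_⟩
    · have h1 := Finset.single_le_sum (f := fun y => |q₀ y|) (fun x _ => abs_nonneg _)
        (Finset.mem_univ y)
      have h2 : 0 ≤ (∑ y, |r y|) / (1 - γ) :=
        div_nonneg (Finset.sum_nonneg fun _ _ => abs_nonneg _) hg.le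
      linarith
    · have h1 := Finset.single_le_sum (f := fun y => |r y|) (fun x _ => abs_nonneg _)
        (Finset.mem_univ y)
      have h2 : (1 - γ) * ((∑ y, |r y|) / (1 - γ)) = ∑ y, |r y| := by field_simp
      have h3 : 0 ≤ (1 - γ) * ∑ y, |q₀ y| :=
        mul_nonneg hg.le (Finset.sum_nonneg fun _ _ => abs_nonneg _)
      linarith
  have hsup : ∀ (f : S × A → ℝ), (∀ y, |f y| ≤ C) → ∀ s, |⨆ b, f (s, b)| ≤ C := by
    intro f hf s
    simpa using abs_ciSup_sub_ciSup_le (f := fun b => f (s, b)) (g := fun _ => (0 : ℝ))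
      (C := C) fun b => by simpa using hf (s, b)
  have hbdd : ∀ t ω y, |q t ω y| ≤ C := by
    intro t ω
    induction t with
    | zero => intro y; rw [hq0]; exact hC0 y
    | succ t ih =>
      intro y
      rw [hqstep]
      by_cases hy : y = ω t
      · subst hy
        have e : q t ω (ω t) + α t * (r (ω t) + γ * (⨆ b, q t ω ((ω (t + 1)).1, b))
            - q t ω (ω t)) * (if ω t = ω t then 1 else 0) = (1 - α t) * q t ω (ω t)
            + α t * (r (ω t) + γ * ⨆ b, q t ω ((ω (t + 1)).1, b)) := by
          rw [if_pos rfl]; ring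
        have h1 : |r (ω t) + γ * ⨆ b, q t ω ((ω (t + 1)).1, b)| ≤ C := by
          refine (abs_add_le _ _).trans (le_trans ?_ (hCr (ω t)))
          rw [abs_mul, abs_of_nonneg hγ0]
          gcongr
          exact hsup _ ih _
        rw [e]
        refine (abs_add_le _ _).trans ?_
        rw [abs_mul, abs_mul, abs_of_nonneg (hα0 t), abs_of_nonneg (sub_nonneg.2 (hα1 t))]
        have h2 := mul_le_mul_of_nonneg_left h1 (hα0 t)
        have h3 := mul_le_mul_of_nonneg_left (ih (ω t)) (sub_nonneg.2 (hα1 t))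
        linarith
      · rw [if_neg hy, mul_zero, add_zero]
        exact ih y
  set G : S × A → ℕ → (ℕ → S × A) → S × A → ℝ := fun y t ω y' =>
    (if y = ω t then 1 else 0) * (γ * ⨆ b, q t ω (y'.1, b)) with hG
  have hnoise : ∀ y, ∀ᵐ ω ∂μ, ∃ l, Tendsto
      (fun n => ∑ t ∈ range n, α t * innovation Pind (G y) t ω) atTop (nhds l) := by
    intro y
    refine ae_exists_tendsto_sum_innovation hP0 hP1 hιnonneg hμ
      (by rw [hα]; exact summable_stepSize_sq hν.1) (fun t ω ω' h => ?_) (B := γ * C)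
      fun t ω y' => ?_
    · funext y'
      simp only [hG, hdep t h, h t (Set.mem_Iic.2 le_rfl)]
    · have h1 := mul_le_mul_of_nonneg_left (hsup _ (hbdd t ω) y'.1) hγ0
      simp only [hG]
      split_ifs
      · rwa [one_mul, abs_mul, abs_of_nonneg hγ0]
      · rw [zero_mul, abs_zero]
        exact (mul_nonneg hγ0 (abs_nonneg _)).trans h1
  have hvisit : ∀ y, ∀ᵐ ω ∂μ, Tendsto
      (fun n => ∑ t ∈ range n, α t * (if y = ω t then 1 else 0)) atTop atTop := fun y =>
    ae_tendsto_sum_visits hP0 hP1 hirr hιnonneg hμ hα0 (by rw [hα]; exact antitone_stepSize hν0)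
      (by rw [hα]; exact summable_stepSize_sq hν.1)
      (by rw [hα]; exact tendsto_sum_stepSize hν.2) y
  filter_upwards [ae_all_iff.2 hnoise, ae_all_iff.2 hvisit] with ω hω1 hω2
  choose l hl using hω1
  rw [tendsto_pi_nhds]
  intro y
  rw [← tendsto_sub_nhds_zero_iff]
  refine tendsto_zero_of_async_contraction hγ0 hγ1 (l := l)
    (a := fun t y => α t * (if y = ω t then 1 else 0))
    (e := fun t y => α t * innovation Pind (G y) t ω)
    (h := fun t y => γ * ∑ s', p y s' * ((⨆ b, q t ω (s', b)) - ⨆ b, qstar (s', b)))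
    (D := fun t y => q t ω y - qstar y) (B := C + ∑ y, |qstar y|)
    (fun t y => ?_) (fun t y => ?_) hω2 hl (fun t y => ?_) (fun t E hE y => ?_)
    (fun t y => ?_) y
  · exact mul_nonneg (hα0 t) (by split_ifs <;> norm_num)
  · split_ifs
    · rw [mul_one]; exact hα1 t
    · rw [mul_zero]; exact zero_le_one
  · have h1 := Finset.single_le_sum (f := fun y => |qstar y|) (fun x _ => abs_nonneg _)
      (Finset.mem_univ y)
    have h2 := abs_sub (q t ω y) (qstar y)
    linarith [hbdd t ω y]
  · rw [abs_mul, abs_of_nonneg hγ0]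
    refine mul_le_mul_of_nonneg_left ?_ hγ0
    calc |∑ s', p y s' * ((⨆ b, q t ω (s', b)) - ⨆ b, qstar (s', b))|
        ≤ ∑ s', |p y s' * ((⨆ b, q t ω (s', b)) - ⨆ b, qstar (s', b))| :=
          Finset.abs_sum_le_sum_abs _ _
      _ ≤ ∑ s', p y s' * E := by
          refine Finset.sum_le_sum fun s' _ => ?_
          rw [abs_mul, abs_of_nonneg (hpnonneg _ _)]
          exact mul_le_mul_of_nonneg_left
            (abs_ciSup_sub_ciSup_le fun b => hE (s', b)) (hpnonneg _ _)
      _ = E := by rw [← Finset.sum_mul, hpsum, one_mul]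
  · have hstar : qstar y = r y + γ * ∑ s', p y s' * ⨆ b, qstar (s', b) :=
      (congrFun hqstar y).symm
    simp only [hqstep]
    by_cases hy : y = ω t
    · have h1 : innovation Pind (G y) t ω = γ * (⨆ b, q t ω ((ω (t + 1)).1, b))
          - γ * ∑ s', p y s' * ⨆ b, q t ω (s', b) := by
        simp only [innovation, hG, if_pos hy, one_mul]
        rw [hPsum (ω t) fun s => γ * ⨆ b, q t ω (s, b), Finset.mul_sum, ← hy]
        congr 1
        exact Finset.sum_congr rfl fun s _ => by ring
      have h2 : ∑ s', p y s' * ((⨆ b, q t ω (s', b)) - ⨆ b, qstar (s', b))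
          = ∑ s', p y s' * (⨆ b, q t ω (s', b)) - ∑ s', p y s' * ⨆ b, qstar (s', b) := by
        simp_rw [mul_sub]
        rw [Finset.sum_sub_distrib]
      rw [h1, h2, if_pos hy, ← hy]
      linear_combination (-α t) * hstar
    · have h1 : innovation Pind (G y) t ω = 0 := by
        simp [innovation, hG, if_neg hy]
      rw [h1, if_neg hy]
      ring
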